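/- Let G' be a digraph on n vertices such that every vertex set S with βn/5 ≤ |S| ≤ n/2 satisfies |Out_{G'}(S)| ≥ βn/150, and similarly every such S satisfies |In_{G'}(S)| ≥ βn/150. Then for any two vertex sets V_a, V_b, each of size at least βn/5, there is a directed path in G' from a vertex of V_a to a vertex of V_b of length at most 300/β + 1. -/

import Mathlib

open Finset

/-- If every finite set `S` with `a ≤ |S| ≤ b` has at least `c` outside `r`-successors, then the
set reachable from `S₀` in at most `m` steps has more than `b` or at least `a + m * c` elements. -/
theorem exists_large_reachable_finset {V : Type*} [Fintype V] [DecidableEq V]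
    (r : V → V → Prop) [DecidableRel r] {a b c : ℝ} (hc : 0 ≤ c)
    (hexp : ∀ S : Finset V, a ≤ (S.card : ℝ) → (S.card : ℝ) ≤ b →
      c ≤ ((Finset.univ.filter (fun v => v ∉ S ∧ ∃ u ∈ S, r u v)).card : ℝ))
    (S₀ : Finset V) (hS₀ : a ≤ (S₀.card : ℝ)) (m : ℕ) :
    ∃ T : Finset V, (b < (T.card : ℝ) ∨ a + m * c ≤ (T.card : ℝ)) ∧
      ∀ v ∈ T, ∃ k ≤ m, ∃ g : ℕ → V, g 0 ∈ S₀ ∧ g k = v ∧ ∀ i < k, r (g i) (g (i + 1)) := by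
  induction m with
  | zero =>
    exact ⟨S₀, .inr (by simpa using hS₀), fun v hv => ⟨0, le_rfl, fun _ => v, hv, rfl, by simp⟩⟩
  | succ m ih =>
    obtain ⟨T, hT, hwalk⟩ := ih
    by_cases hb : b < (T.card : ℝ)
    · refine ⟨T, .inl hb, fun v hv => ?_⟩
      obtain ⟨k, hk, hg⟩ := hwalk v hv
      exact ⟨k, hk.trans m.le_succ, hg⟩
    have hT' : a + m * c ≤ (T.card : ℝ) := hT.resolve_left hb
    have hgrow := hexp T (by nlinarith [mul_nonneg (Nat.cast_nonneg (α := ℝ) m) hc]) (not_lt.mp hb)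
    refine ⟨T ∪ Finset.univ.filter (fun v => v ∉ T ∧ ∃ u ∈ T, r u v), .inr ?_, fun v hv => ?_⟩
    · rw [Finset.card_union_of_disjoint]
      · push_cast
        linarith
      · rw [Finset.disjoint_left]
        intro v hv hv'
        exact (Finset.mem_filter.mp hv').2.1 hv
    · rcases Finset.mem_union.mp hv with hv | hv
      · obtain ⟨k, hk, hg⟩ := hwalk v hv
        exact ⟨k, hk.trans m.le_succ, hg⟩
      · obtain ⟨-, -, u, hu, huv⟩ := Finset.mem_filter.mp hv
        obtain ⟨k, hk, g, hg0, hgk, hg⟩ := hwalk u hu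
        refine ⟨k + 1, by omega, fun t => if t ≤ k then g t else v, by simpa, by simp, ?_⟩
        intro i hi
        rcases Nat.lt_succ_iff_lt_or_eq.mp hi with hi | rfl
        · simpa [hi.le, Nat.succ_le_of_lt hi] using hg i hi
        · simpa [hgk] using huv

/-- A walk between two sets can be shortened to a path, that is, to an injective walk. -/
theorem exists_injective_walk_of_walk {V : Type*} (r : V → V → Prop) (A B : Set V) {m : ℕ}
    (h : ∃ g : ℕ → V, g 0 ∈ A ∧ g m ∈ B ∧ ∀ i < m, r (g i) (g (i + 1))) :
    ∃ k ≤ m, ∃ g : ℕ → V, Set.InjOn g (Set.Iic k) ∧ g 0 ∈ A ∧ g k ∈ B ∧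
      ∀ i < k, r (g i) (g (i + 1)) := by
  classical
  have hex : ∃ k, ∃ g : ℕ → V, g 0 ∈ A ∧ g k ∈ B ∧ ∀ i < k, r (g i) (g (i + 1)) := ⟨m, h⟩
  obtain ⟨g, hg0, hgk, hg⟩ := Nat.find_spec hex
  refine ⟨Nat.find hex, Nat.find_min' hex h, g, ?_, hg0, hgk, hg⟩
  set k := Nat.find hex
  have hne : ∀ i j, i < j → j ≤ k → g i ≠ g j := by
    intro i j hij hjk heq
    refine Nat.find_min hex (m := k - (j - i)) (by omega)
      ⟨fun t => if t ≤ i then g t else g (t + (j - i)), by simpa, ?_, ?_⟩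
    · rcases hjk.eq_or_lt with hjk | hjk
      · have hki : k - (j - i) = i := by omega
        simp only [hki, le_rfl, if_true]
        rwa [heq, hjk]
      · have hki : ¬ k - (j - i) ≤ i := by omega
        have hadd : k - (j - i) + (j - i) = k := by omega
        simpa [hki, hadd] using hgk
    · intro t ht
      rcases lt_trichotomy t i with hti | rfl | hti
      · simpa [hti.le, Nat.succ_le_of_lt hti] using hg t (by omega)
      · have hadd : t + 1 + (j - t) = j + 1 := by omega
        simpa [hadd, heq] using hg j (by omega)
      · have hadd : t + 1 + (j - i) = t + (j - i) + 1 := by omega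
        simpa [hti.not_ge, show ¬ t + 1 ≤ i by omega, hadd] using hg (t + (j - i)) (by omega)
  intro i hi j hj heq
  rcases lt_trichotomy i j with hij | hij | hij
  · exact (hne i j hij hj heq).elim
  · exact hij
  · exact (hne j i hij hi heq.symm).elim

/-- If in a digraph every `S` with `βn/5 ≤ |S| ≤ n/2` has both out- and
in-neighbourhood of size at least `βn/150`, then between any two sets `V_a, V_b`
of size at least `βn/5` there is a directed path of length at most `300/β + 1`. -/
theorem short_path_between_large_sets {V : Type*} [Fintype V] [DecidableEq V]
    (E : Finset (V × V)) (n : ℕ) (hn : Fintype.card V = n) (hn0 : 0 < n)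
    (β : ℝ) (hβ0 : 0 < β) (hβ1 : β ≤ 1)
    (hout : ∀ S : Finset V, β * n / 5 ≤ (S.card : ℝ) → (S.card : ℝ) ≤ n / 2 →
      β * n / 150 ≤
        ((Finset.univ.filter (fun v => v ∉ S ∧ ∃ u ∈ S, (u, v) ∈ E)).card : ℝ))
    (hin : ∀ S : Finset V, β * n / 5 ≤ (S.card : ℝ) → (S.card : ℝ) ≤ n / 2 →
      β * n / 150 ≤
        ((Finset.univ.filter (fun v => v ∉ S ∧ ∃ u ∈ S, (v, u) ∈ E)).card : ℝ))
    (Va Vb : Finset V) (hVa : β * n / 5 ≤ (Va.card : ℝ))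
    (hVb : β * n / 5 ≤ (Vb.card : ℝ)) :
    ∃ k : ℕ, (k : ℝ) ≤ 300 / β + 1 ∧ ∃ f : Fin (k + 1) → V,
      Function.Injective f ∧ f 0 ∈ Va ∧ f (Fin.last k) ∈ Vb ∧
      ∀ i : Fin k, (f i.castSucc, f i.succ) ∈ E := by
  have hn0' : (0 : ℝ) < n := by exact_mod_cast hn0
  have hc : 0 ≤ β * n / 150 := by positivity
  set m := ⌈75 / β⌉₊
  have hm_le : (m : ℝ) < 75 / β + 1 := Nat.ceil_lt_add_one (by positivity)
  have hlarge : (n : ℝ) / 2 < β * n / 5 + m * (β * n / 150) := by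
    have hmβ : 75 ≤ m * β := (div_le_iff₀ hβ0).mp (Nat.le_ceil _)
    nlinarith [mul_le_mul_of_nonneg_right hmβ hn0'.le, mul_pos hβ0 hn0']
  obtain ⟨A, hA, hAwalk⟩ :=
    exists_large_reachable_finset (fun u v => (u, v) ∈ E) hc hout Va hVa m
  obtain ⟨B, hB, hBwalk⟩ :=
    exists_large_reachable_finset (fun u v => (v, u) ∈ E) hc hin Vb hVb m
  have hA' : (n : ℝ) / 2 < A.card := hA.elim id hlarge.trans_le
  have hB' : (n : ℝ) / 2 < B.card := hB.elim id hlarge.trans_le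
  obtain ⟨w, hw⟩ : (A ∩ B).Nonempty := by
    refine Finset.inter_nonempty_of_card_lt_card_add_card A.subset_univ B.subset_univ ?_
    rw [Finset.card_univ, hn]
    have hsum : (n : ℝ) < A.card + B.card := by linarith
    exact_mod_cast hsum
  obtain ⟨p, hp, f, hf0, hfp, hf⟩ := hAwalk w (Finset.mem_inter.mp hw).1
  obtain ⟨q, hq, g, hg0, hgq, hg⟩ := hBwalk w (Finset.mem_inter.mp hw).2
  obtain ⟨k, hk, e, he, he0, hek, hestep⟩ :=
    exists_injective_walk_of_walk (fun u v => (u, v) ∈ E) (Va : Set V) (Vb : Set V) (m := p + q)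
      ⟨fun t => if t < p then f t else g (p + q - t), by
        rcases p.eq_zero_or_pos with rfl | hp0
        · simpa [hgq, ← hfp] using hf0
        · simpa [hp0] using hf0, by simpa using hg0, by
        intro i hi
        rcases lt_trichotomy (i + 1) p with hip | hip | hip
        · simpa [hip, show i < p by omega] using hf i (by omega)
        · subst hip
          simpa [hgq, ← hfp] using hf i (by omega)
        · have hsub : p + q - i = p + q - (i + 1) + 1 := by omega
          simpa only [show ¬ i < p by omega, show ¬ i + 1 < p by omega, if_false, hsub]
            using hg (p + q - (i + 1)) (by omega)⟩
  refine ⟨k, ?_, fun i => e i, fun i j hij => Fin.ext (he ?_ ?_ hij), he0, by simpa using hek,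
    fun i => by simpa using hestep i i.isLt⟩
  · have hkm : (k : ℝ) ≤ m + m := by exact_mod_cast hk.trans (add_le_add hp hq)
    have hβ75 : 75 ≤ 75 / β := (le_div_iff₀ hβ0).mpr (by linarith)
    have h300 : 300 / β = 4 * (75 / β) := by ring
    linarith
  · exact Nat.lt_succ_iff.mp i.isLt
  · exact Nat.lt_succ_iff.mp j.isLt
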